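/- Let n be a natural number, k an integer, a₁, a₂ : Fin n → ℤ, and i, j : Fin n. For h ∈ {1,2} define bₕ to be aₕ if aₕ i ≤ aₕ j, and otherwise the function obtained from aₕ by exchanging the values at positions i and j (i.e., bₕ i = aₕ j, bₕ j = aₕ i, and bₕ t = aₕ t for t ∉ {i,j}). If |a₁ t − a₂ t| ≤ k for every t : Fin n, then |b₁ t − b₂ t| ≤ k for every t : Fin n. -/

import Mathlib

theorem cond_swap_preserves_pointwise_closeness (n : ℕ) (k : ℤ)
    (a₁ a₂ : Fin n → ℤ) (i j : Fin n) (b₁ b₂ : Fin n → ℤ)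
    (hb₁ : b₁ = if a₁ i ≤ a₁ j then a₁
      else Function.update (Function.update a₁ i (a₁ j)) j (a₁ i))
    (hb₂ : b₂ = if a₂ i ≤ a₂ j then a₂
      else Function.update (Function.update a₂ i (a₂ j)) j (a₂ i))
    (h : ∀ t : Fin n, |a₁ t - a₂ t| ≤ k) :
    ∀ t : Fin n, |b₁ t - b₂ t| ≤ k := by
  intro t
  have hi := abs_le.mp (h i)
  have hj := abs_le.mp (h j)
  have ht := abs_le.mp (h t)
  rw [abs_le, hb₁, hb₂]
  by_cases htj : t = j
  · subst htj
    split_ifs <;> (try simp only [Function.update_self]) <;> omega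
  · by_cases hti : t = i
    · subst hti
      split_ifs <;> (try simp only [Function.update_of_ne htj, Function.update_self]) <;> omega
    · split_ifs <;> (try simp only [Function.update_of_ne htj, Function.update_of_ne hti]) <;> omega
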